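/- Let G be a parity game with n vertices whose maximal priority is at most h, with h even. Then Solve_E(G, h, n, n) contains Even's winning region of G (the set of vertices from which Even has a winning strategy) and is disjoint from Odd's winning region of G. -/

import Mathlib

/-!
The procedure with precision parameters is correct because it respects small dominions: on a
subgame `U` whose priorities are bounded by some `h` of the parity of `P`, the set
`solve G P U h pMe pOp` contains every dominion of `P` of size at most `pMe` and is disjoint from
every dominion of the opponent of size at most `pOp` (`solve_spec`). The theorem follows, since a
vertex won by a player lies in a dominion of that player (`WinsFrom.exists_dom`), of at most `n`
vertices.

The first half holds because none of the removed sets `W1`, `W2`, `W3` can meet a small dominion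
of `P`: a dominion that misses a set also misses the opponent's attractor of that set, and its
traces on the subgames that occur are dominions again. For the second half
(`opp_subset_of_precision`), let `D` be a dominion of the opponent `Q` of size at most `pOp`, and
let `A` be an inclusion-maximal dominion of `Q` inside `D ∩ W1`. If `A ≠ D`, then `D \ A` is a
nonempty dominion of `Q` in itself. Some position reached in it can be followed by no vertex of priority
`h`, for otherwise the opponent of `Q` could see `h` infinitely often; so it contains a nonempty
dominion `D'` of `Q` without priority `h` (`Dom.exists_lt`). The part of `D'` outside `W1` lies in
`W2`, by the recursive call with bound `h - 1`, and `A ∪ D'` is a dominion of `Q` in `U`. It has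
more than `pOp / 2` vertices, as otherwise it would be found by the first recursive call and lie
in `W1`, against the choice of `A`. So at most `pOp / 2` vertices of `D` remain for `W3`, and the
last recursive call finds them.

Dominions are represented by covering transition systems (`Dom`), not by strategies on
histories. These can be restricted and glued without any bookkeeping of histories, and no
determinacy theorem is needed.
-/

/-- The two players of a parity game. -/
inductive Player where
  | even : Player
  | odd : Player
deriving DecidableEq

/-- The opponent of a player. -/
def Player.opp : Player → Player
  | even => odd
  | odd => even

/-- A natural number has the parity of the given player. -/
def Player.matchesPriority : Player → ℕ → Prop
  | even => fun p => Even p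
  | odd => fun p => Odd p

/-- A parity game on a vertex type `V`: an ownership function, an edge relation in which
every vertex has at least one successor, and a priority function. -/
structure ParityGame (V : Type*) where
  owner : V → Player
  edge : V → V → Prop
  priority : V → ℕ
  succ_nonempty : ∀ v, ∃ w, edge v w

namespace ParityGame

variable {V : Type*} (G : ParityGame V)

/-- A play is an infinite sequence of vertices following edges. -/
def IsPlay (π : ℕ → V) : Prop := ∀ i, G.edge (π i) (π (i + 1))

/-- Priority `p` occurs infinitely often along the play `π`. -/
def InfOften (π : ℕ → V) (p : ℕ) : Prop := ∀ N, ∃ i, N ≤ i ∧ G.priority (π i) = p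

/-- A play is winning for a player if the highest priority occurring infinitely often
along it has that player's parity. -/
def WinsPlay (P : Player) (π : ℕ → V) : Prop :=
  ∃ p, G.InfOften π p ∧ (∀ q, G.InfOften π q → q ≤ p) ∧ P.matchesPriority p

/-- A play `π` agrees with the strategy `σ` of player `P` (a strategy maps a history
together with the current vertex to the next vertex). -/
def Agrees (P : Player) (σ : List V → V → V) (π : ℕ → V) : Prop :=
  ∀ i, G.owner (π i) = P → π (i + 1) = σ (List.ofFn fun j : Fin i => π j) (π i)

/-- `σ` is a valid strategy for player `P`: at `P`'s vertices it prescribes a successor. -/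
def ValidFor (P : Player) (σ : List V → V → V) : Prop :=
  ∀ hist v, G.owner v = P → G.edge v (σ hist v)

/-- Player `P` has a winning strategy from vertex `v`. -/
def WinsFrom (P : Player) (v : V) : Prop :=
  ∃ σ, G.ValidFor P σ ∧ ∀ π, π 0 = v → G.IsPlay π → G.Agrees P σ π → G.WinsPlay P π

/-- The winning region of player `P`. -/
def winningRegion (P : Player) : Set V := {v | G.WinsFrom P v}

/-- Player `P` has a winning strategy from `v` in the subgame induced by the set `D`:
a strategy that at `P`'s vertices of `D` prescribes successors inside `D` and wins
every play that starts at `v`, stays in `D` and agrees with it. -/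
def WinsWithinFrom (P : Player) (D : Set V) (v : V) : Prop :=
  ∃ σ : List V → V → V,
    (∀ hist w, w ∈ D → G.owner w = P → σ hist w ∈ D ∧ G.edge w (σ hist w)) ∧
    ∀ π, π 0 = v → G.IsPlay π → (∀ i, π i ∈ D) → G.Agrees P σ π → G.WinsPlay P π

/-- `D` is a dominion for player `P` in the subgame of `G` induced by the vertex set `U`:
`D ⊆ U`, every `P`-vertex of `D` has a successor in `D`, every opponent vertex of `D`
has all of its successors (within the subgame) in `D`, and `P` wins from every vertex
of `D` in the subgame induced by `D`. -/
def IsDominionIn (P : Player) (U D : Set V) : Prop :=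
  D ⊆ U ∧
  (∀ v ∈ D, G.owner v = P → ∃ w ∈ D, G.edge v w) ∧
  (∀ v ∈ D, G.owner v ≠ P → ∀ w ∈ U, G.edge v w → w ∈ D) ∧
  ∀ v ∈ D, G.WinsWithinFrom P D v

/-- `D` is a dominion for player `P` in `G`. -/
def IsDominion (P : Player) (D : Set V) : Prop := G.IsDominionIn P Set.univ D

/-- The attractor for player `P` of the set `X`, computed in the subgame of `G` induced
by the vertex set `U`: the least set containing `X` such that a `P`-vertex with some
successor in it belongs to it, and an opponent vertex all of whose successors (within
the subgame) are in it belongs to it. -/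
inductive AttrIn (P : Player) (U X : Set V) : V → Prop
  | base {v} : v ∈ X → AttrIn P U X v
  | player {v w} : v ∈ U → G.owner v = P → w ∈ U → G.edge v w → AttrIn P U X w →
      AttrIn P U X v
  | opponent {v} : v ∈ U → G.owner v ≠ P → (∀ w ∈ U, G.edge v w → AttrIn P U X w) →
      AttrIn P U X v

/-- The attractor, within subgame `U`, as a set. -/
def attrIn (P : Player) (U X : Set V) : Set V := {v | G.AttrIn P U X v}

/-- The attractor `Attr_P(X, G)` for player `P` of the set `X` in the whole game `G`. -/
def attractor (P : Player) (X : Set V) : Set V := G.attrIn P Set.univ X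

/-- `T` is a trap for player `P`: every `P`-vertex of `T` has all of its successors in
`T`, and every opponent vertex of `T` has at least one successor in `T`. -/
def IsTrap (P : Player) (T : Set V) : Prop :=
  (∀ v ∈ T, G.owner v = P → ∀ w, G.edge v w → w ∈ T) ∧
  (∀ v ∈ T, G.owner v ≠ P → ∃ w ∈ T, G.edge v w)

end ParityGame

namespace ParityGame

variable {V : Type*}

/-- The recursive procedure `Solve_P(G, h, pMe, pOp)` of the modified Parys algorithm,
computed on the subgame of `G` induced by the current vertex set `U`.  `Solve_E G U h p_E p_O`
is `solve G .even U h p_E p_O` and its dual `Solve_O G U h p_O p_E` is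
`solve G .odd U h p_O p_E`. -/
noncomputable def solve (G : ParityGame V) (P : Player) (U : Set V) (h pMe pOp : ℕ) :
    Set V :=
  letI := Classical.propDecidable
  if U = ∅ then ∅
  else if hh : h = 0 then (match P with | .even => U | .odd => ∅)
  else if hp : pOp = 0 then U
  else
    let W := U \ G.solve P U h pMe (pOp / 2)
    let W1 := G.attrIn P.opp U W
    let G1 := U \ W1
    let Nh := {v ∈ G1 | G.priority v = h}
    let G2 := G1 \ G.attrIn P G1 Nh
    let W' := G.solve P.opp G2 (h - 1) pOp pMe
    let W2 := G.attrIn P.opp G1 W'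
    let G3 := G1 \ W2
    let W3 := G3 \ G.solve P G3 h pMe (pOp / 2)
    U \ (W1 ∪ W2 ∪ W3)
termination_by (h, pOp)
decreasing_by
  · exact Prod.Lex.right h (Nat.div_lt_self (Nat.pos_of_ne_zero hp) one_lt_two)
  · exact Prod.Lex.left _ _ (Nat.sub_lt (Nat.pos_of_ne_zero hh) one_pos)
  · exact Prod.Lex.right h (Nat.div_lt_self (Nat.pos_of_ne_zero hp) one_lt_two)

end ParityGame

namespace ParityGame

universe u

variable {V : Type u} {G : ParityGame V} {P : Player} {U D : Set V}

/-! ### Plays and attractors -/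

theorem infOften_shift {π : ℕ → V} (k p : ℕ) :
    G.InfOften (fun n => π (k + n)) p ↔ G.InfOften π p := by
  constructor
  · intro h N
    obtain ⟨i, hi, hp⟩ := h N
    exact ⟨k + i, by omega, hp⟩
  · intro h N
    obtain ⟨i, hi, hp⟩ := h (k + N)
    refine ⟨i - k, by omega, ?_⟩
    have : k + (i - k) = i := by omega
    simpa [this] using hp

/-- Winning a play depends only on its tails. -/
theorem winsPlay_shift {π : ℕ → V} (k : ℕ) :
    G.WinsPlay P (fun n => π (k + n)) ↔ G.WinsPlay P π := by
  simp only [WinsPlay, infOften_shift]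

theorem owner_eq_opp {Q : Player} : Q ≠ P ↔ Q = P.opp := by
  cases P <;> cases Q <;> simp [Player.opp]

theorem opp_opp : P.opp.opp = P := by cases P <;> rfl

theorem ne_opp {Q : Player} : Q ≠ P.opp ↔ Q = P := by
  cases P <;> cases Q <;> simp [Player.opp]

theorem not_opp_matches {h : ℕ} (hm : P.matchesPriority h) : ¬ P.opp.matchesPriority h := by
  cases P <;> simp_all [Player.opp, Player.matchesPriority]

theorem opp_matches_pred {h : ℕ} (h0 : h ≠ 0) (hm : P.matchesPriority h) :
    P.opp.matchesPriority (h - 1) := by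
  cases P <;> simp_all only [Player.opp, Player.matchesPriority] <;> grind

/-- `U` induces a subgame: every vertex of `U` has a successor inside `U`. -/
def Sub (G : ParityGame V) (U : Set V) : Prop := ∀ v ∈ U, ∃ w ∈ U, G.edge v w

theorem Sub.diff_attrIn (hU : G.Sub U) (P : Player) (X : Set V) :
    G.Sub (U \ G.attrIn P U X) := by
  intro v ⟨hv, hva⟩
  by_contra! hc
  apply hva
  obtain ⟨w, hw, hvw⟩ := hU v hv
  have hall : ∀ w ∈ U, G.edge v w → G.AttrIn P U X w := by
    intro w hw hvw
    by_contra hn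
    exact hc w ⟨hw, hn⟩ hvw
  by_cases ho : G.owner v = P
  · exact .player hv ho hw hvw (hall w hw hvw)
  · exact .opponent hv ho hall

theorem mem_diff_attrIn {X : Set V} {v w : V} (hv : v ∈ U \ G.attrIn P U X)
    (ho : G.owner v = P) (hw : w ∈ U) (hvw : G.edge v w) : w ∈ U \ G.attrIn P U X :=
  ⟨hw, fun ha => hv.2 (.player hv.1 ho hw hvw ha)⟩

/-! ### Dominions as covering transition systems -/

/-- `D` is a dominion of `P` in the subgame induced by `U`, witnessed by a transition system `S`
over `D`. Its states are positions of a play together with whatever `P` remembers of the history;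
`lab` is the vertex of a state. Moves of the opponent within `U` are all matched by transitions,
every state has a transition, and every infinite path is won by `P`. -/
def Dom (G : ParityGame V) (P : Player) (U D : Set V) : Prop :=
  D ⊆ U ∧ ∃ (S : Type u) (lab : S → V) (step : S → S → Prop),
    Set.range lab = D ∧
    (∀ s t, step s t → G.edge (lab s) (lab t)) ∧
    (∀ s, ∃ t, step s t) ∧
    (∀ s, G.owner (lab s) ≠ P → ∀ w ∈ U, G.edge (lab s) w → ∃ t, step s t ∧ lab t = w) ∧
    (∀ x : ℕ → S, (∀ n, step (x n) (x (n + 1))) → G.WinsPlay P (fun n => lab (x n)))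

theorem Dom.exists_succ (hD : G.Dom P U D) {v : V} (hv : v ∈ D) : ∃ w ∈ D, G.edge v w := by
  obtain ⟨-, S, lab, step, rfl, hE, hT, -, -⟩ := hD
  obtain ⟨s, rfl⟩ := hv
  obtain ⟨t, ht⟩ := hT s
  exact ⟨_, ⟨t, rfl⟩, hE _ _ ht⟩

theorem Dom.closed (hD : G.Dom P U D) {v w : V} (hv : v ∈ D) (ho : G.owner v ≠ P)
    (hw : w ∈ U) (hvw : G.edge v w) : w ∈ D := by
  obtain ⟨-, S, lab, step, rfl, -, -, hO, -⟩ := hD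
  obtain ⟨s, rfl⟩ := hv
  obtain ⟨t, -, ht⟩ := hO s ho w hw hvw
  exact ⟨t, ht⟩

theorem dom_empty : G.Dom P U ∅ :=
  ⟨Set.empty_subset _, PEmpty, PEmpty.elim, fun _ _ => False, Set.range_eq_empty_iff.2 ⟨PEmpty.elim⟩,
    fun s => s.elim, fun s => s.elim, fun s => s.elim, fun x => (x 0).elim⟩

/-- The trace of a dominion on another subgame `T` is a dominion there, provided that within the
dominion `P` cannot leave `T`, and that the opponent's moves in `T` were already available. -/
theorem Dom.inter {T : Set V} (hD : G.Dom P U D) (hT : G.Sub T)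
    (hP : ∀ v ∈ D, v ∈ T → G.owner v = P → ∀ w ∈ D, G.edge v w → w ∈ T)
    (hO : ∀ v ∈ D, v ∈ T → G.owner v ≠ P → ∀ w ∈ T, G.edge v w → w ∈ U) :
    G.Dom P T (D ∩ T) := by
  obtain ⟨-, S, lab, step, rfl, hE, hTot, hOpp, hW⟩ := hD
  have key : ∀ s, lab s ∈ T → G.owner (lab s) ≠ P → ∀ w ∈ T, G.edge (lab s) w →
      ∃ t, step s t ∧ lab t = w := fun s hs ho w hw hvw =>
    hOpp s ho w (hO _ ⟨s, rfl⟩ hs ho w hw hvw) hvw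
  refine ⟨Set.inter_subset_right, {s // lab s ∈ T}, fun s => lab s.1,
    fun s t => step s.1 t.1, ?_, fun s t h => hE _ _ h, ?_, ?_, ?_⟩
  · ext v
    constructor
    · rintro ⟨s, rfl⟩
      exact ⟨⟨s.1, rfl⟩, s.2⟩
    · rintro ⟨⟨s, rfl⟩, hs⟩
      exact ⟨⟨s, hs⟩, rfl⟩
  · rintro ⟨s, hs⟩
    by_cases ho : G.owner (lab s) = P
    · obtain ⟨t, ht⟩ := hTot s
      exact ⟨⟨t, hP _ ⟨s, rfl⟩ hs ho _ ⟨t, rfl⟩ (hE _ _ ht)⟩, ht⟩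
    · obtain ⟨w, hw, hvw⟩ := hT _ hs
      obtain ⟨t, ht, rfl⟩ := key s hs ho w hw hvw
      exact ⟨⟨t, hw⟩, ht⟩
  · rintro ⟨s, hs⟩ ho w hw hvw
    obtain ⟨t, ht, rfl⟩ := key s hs ho w hw hvw
    exact ⟨⟨t, hw⟩, ht, rfl⟩
  · intro x hx
    exact hW (fun n => (x n).1) hx

theorem Dom.mono {T : Set V} (hD : G.Dom P U D) (hT : G.Sub T) (hTU : T ⊆ U) (hDT : D ⊆ T) :
    G.Dom P T D := by
  have := hD.inter hT (fun _ _ _ _ w hw _ => hDT hw) (fun _ _ _ _ w hw _ => hTU hw)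
  rwa [Set.inter_eq_left.2 hDT] at this

theorem Dom.sub (hD : G.Dom P U D) : G.Sub D := fun _ hv => hD.exists_succ hv

/-- A dominion inside a dominion `D` is a dominion of the ambient subgame. -/
theorem Dom.trans {X : Set V} (hU : G.Sub U) (hD : G.Dom P U D) (hX : G.Dom P D X) :
    G.Dom P U X := by
  have := hX.inter hU (fun _ _ _ _ w hw _ => hD.1 (hX.1 hw))
    (fun v hv _ ho w hw hvw => hD.closed (hX.1 hv) ho hw hvw)
  rwa [Set.inter_eq_left.2 (hX.1.trans hD.1)] at this

/-- After the removal of the player's own attractor of any set, the rest of a dominion is a dominion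
of the remaining game: the player has no move from outside the attractor into it. -/
theorem Dom.diff_attrIn_same (hU : G.Sub U) (hD : G.Dom P U D) (X : Set V) :
    G.Dom P (U \ G.attrIn P U X) (D ∩ (U \ G.attrIn P U X)) :=
  hD.inter (hU.diff_attrIn P X)
    (fun _ _ hv ho _ hw hvw => mem_diff_attrIn hv ho (hD.1 hw) hvw)
    (fun _ _ _ _ _ hw _ => hw.1)

theorem Dom.disjoint_attrIn_opp {X : Set V} (hD : G.Dom P U D) (h : Disjoint D X) :
    Disjoint D (G.attrIn P.opp U X) := by
  rw [Set.disjoint_left] at h ⊢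
  intro v hv ha
  have ha : G.AttrIn P.opp U X v := ha
  induction ha with
  | base hx => exact h hv hx
  | player _ ho hw hvw hwa ih =>
    exact ih (hD.closed hv (by rwa [owner_eq_opp]) hw hvw) hwa
  | opponent _ ho hall ih =>
    obtain ⟨w, hw, hvw⟩ := hD.exists_succ hv
    exact ih w (hD.1 hw) hvw hw (hall w (hD.1 hw) hvw)

theorem Dom.diff_attrIn_opp {X : Set V} (hU : G.Sub U) (hD : G.Dom P U D) (h : Disjoint D X) :
    G.Dom P (U \ G.attrIn P.opp U X) D :=
  hD.mono (hU.diff_attrIn _ _) Set.sdiff_subset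
    (Set.subset_sdiff.2 ⟨hD.1, hD.disjoint_attrIn_opp h⟩)

/-- A dominion `X` can be enlarged by the states of a system in which the moves not matched
inside the system lead into `X`. -/
theorem Dom.glue {X : Set V} (hX : G.Dom P U X) {S : Type u} (lab : S → V)
    (step : S → S → Prop) (hU : Set.range lab ⊆ U)
    (hE : ∀ s t, step s t → G.edge (lab s) (lab t))
    (hT : ∀ s, (∃ t, step s t) ∨ ∃ w ∈ X, G.edge (lab s) w)
    (hO : ∀ s, G.owner (lab s) ≠ P → ∀ w ∈ U, G.edge (lab s) w →
      w ∈ X ∨ ∃ t, step s t ∧ lab t = w)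
    (hW : ∀ x : ℕ → S, (∀ n, step (x n) (x (n + 1))) → G.WinsPlay P (fun n => lab (x n))) :
    G.Dom P U (X ∪ Set.range lab) := by
  obtain ⟨hXU, R, lab', step', rfl, hE', hT', hO', hW'⟩ := hX
  let L : R ⊕ S → V := Sum.elim lab' lab
  -- transitions inside the two systems, and every edge from the new states into `X`
  let st : R ⊕ S → R ⊕ S → Prop
    | .inl r, .inl r' => step' r r'
    | .inl _, .inr _ => False
    | .inr s, .inl r => G.edge (lab s) (lab' r)
    | .inr s, .inr s' => step s s'
  refine ⟨Set.union_subset hXU hU, R ⊕ S, L, st, Set.Sum.elim_range _ _, ?_, ?_, ?_, ?_⟩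
  · rintro (r | s) (r' | s') h
    · exact hE' _ _ h
    · exact h.elim
    · exact h
    · exact hE _ _ h
  · rintro (r | s)
    · obtain ⟨t, ht⟩ := hT' r
      exact ⟨.inl t, ht⟩
    · rcases hT s with ⟨t, ht⟩ | ⟨_, ⟨r, rfl⟩, hr⟩
      · exact ⟨.inr t, ht⟩
      · exact ⟨.inl r, hr⟩
  · rintro (r | s) ho w hw hvw
    · obtain ⟨t, ht, hl⟩ := hO' r ho w hw hvw
      exact ⟨.inl t, ht, hl⟩
    · rcases hO s ho w hw hvw with ⟨r, rfl⟩ | ⟨t, ht, hl⟩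
      · exact ⟨.inl r, hvw, rfl⟩
      · exact ⟨.inr t, ht, hl⟩
  · intro x hx
    by_cases hc : ∃ k r, x k = .inl r
    · -- once the path is in the system of `X`, it stays there
      obtain ⟨k, r, hk⟩ := hc
      have hall : ∀ n, ∃ r, x (k + n) = .inl r := by
        intro n
        induction n with
        | zero => exact ⟨r, hk⟩
        | succ n ih =>
          obtain ⟨a, ha⟩ := ih
          have h1 := hx (k + n)
          rw [ha] at h1
          rcases hb : x (k + n + 1) with b | b
          · exact ⟨b, rfl⟩
          · change st (.inl a) (x (k + n + 1)) at h1
            rw [hb] at h1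
            exact h1.elim
      choose y hy using hall
      rw [← winsPlay_shift k]
      have := hW' y (fun n => by
        have h1 := hx (k + n)
        rw [hy n, show k + n + 1 = k + (n + 1) from rfl, hy (n + 1)] at h1
        exact h1)
      simpa [hy, L] using this
    · push Not at hc
      have hall : ∀ n, ∃ s, x n = .inr s := by
        intro n
        rcases hb : x n with b | b
        · exact (hc n b hb).elim
        · exact ⟨b, rfl⟩
      choose y hy using hall
      have := hW y (fun n => by
        have h1 := hx n
        rw [hy n, hy (n + 1)] at h1
        exact h1)
      simpa [hy, L] using this

theorem Dom.union {X Y : Set V} (hX : G.Dom P U X) (hY : G.Dom P (U \ X) Y) :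
    G.Dom P U (X ∪ Y) := by
  obtain ⟨hYU, S, lab, step, rfl, hE, hT, hO, hW⟩ := hY
  refine hX.glue lab step (hYU.trans Set.sdiff_subset) hE (fun s => .inl (hT s)) ?_ hW
  intro s ho w hw hvw
  by_cases h : w ∈ X
  · exact .inl h
  · exact .inr (hO s ho w ⟨hw, h⟩ hvw)

/-- A vertex from which `P` can force the next move into a dominion can be added to it. -/
theorem Dom.insert {X : Set V} {v : V} (hX : G.Dom P U X) (hv : v ∈ U)
    (hs : ∃ w ∈ X, G.edge v w) (ho : G.owner v ≠ P → ∀ w ∈ U, G.edge v w → w ∈ X) :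
    G.Dom P U (X ∪ {v}) := by
  have := hX.glue (S := PUnit) (fun _ => v) (fun _ _ => False) (by simpa using hv)
    (by simp) (fun _ => .inr hs) (fun _ h w hw hvw => .inl (ho h w hw hvw))
    (fun x hx => (hx 0).elim)
  simpa using this

/-! ### Winning strategies yield dominions -/

/-- A path may be prolonged backwards along a finite chain of transitions. -/
theorem exists_path_of_reach {S : Type*} {step : S → S → Prop} {r : S} {x : ℕ → S}
    (hx : ∀ n, step (x n) (x (n + 1))) (hr : Relation.ReflTransGen step r (x 0)) :
    ∃ y : ℕ → S, y 0 = r ∧ (∀ n, step (y n) (y (n + 1))) ∧ ∃ k, ∀ n, y (k + n) = x n := by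
  induction hr using Relation.ReflTransGen.head_induction_on with
  | refl => exact ⟨x, rfl, hx, 0, by simp⟩
  | @head a b hab _ ih =>
    obtain ⟨y, hy0, hy, k, hk⟩ := ih
    refine ⟨fun n => Nat.casesOn n a y, rfl, ?_, k + 1, ?_⟩
    · rintro (_ | n)
      · simpa [hy0] using hab
      · exact hy n
    · intro n
      rw [show k + 1 + n = (k + n) + 1 by omega]
      exact hk n

theorem WinsFrom.exists_dom {v : V} (hv : G.WinsFrom P v) :
    ∃ D, v ∈ D ∧ G.Dom P Set.univ D := by
  obtain ⟨σ, hσ, hw⟩ := hv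
  -- a state is a history with the current vertex
  let st : List V × V → List V × V → Prop := fun a b =>
    b.1 = a.1 ++ [a.2] ∧ G.edge a.2 b.2 ∧ (G.owner a.2 = P → b.2 = σ a.1 a.2)
  let S := {s : List V × V // Relation.ReflTransGen st ([], v) s}
  refine ⟨Set.range (fun s : S => s.1.2), ⟨⟨([], v), .refl⟩, rfl⟩, Set.subset_univ _, S,
    fun s => s.1.2, fun s t => st s.1 t.1, rfl, fun s t h => h.2.1, ?_, ?_, ?_⟩
  · rintro ⟨⟨l, a⟩, hs⟩
    by_cases ho : G.owner a = P
    · have h1 : st (l, a) (l ++ [a], σ l a) := ⟨rfl, hσ l a ho, fun _ => rfl⟩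
      exact ⟨⟨_, hs.tail h1⟩, h1⟩
    · obtain ⟨w, hw⟩ := G.succ_nonempty a
      have h1 : st (l, a) (l ++ [a], w) := ⟨rfl, hw, fun h => (ho h).elim⟩
      exact ⟨⟨_, hs.tail h1⟩, h1⟩
  · rintro ⟨⟨l, a⟩, hs⟩ ho w - hw
    have h1 : st (l, a) (l ++ [a], w) := ⟨rfl, hw, fun h => (ho h).elim⟩
    exact ⟨⟨_, hs.tail h1⟩, h1, rfl⟩
  · intro x hx
    obtain ⟨y, hy0, hy, k, hk⟩ := exists_path_of_reach (x := fun n => (x n).1) hx (x 0).2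
    have hist : ∀ n, (y n).1 = List.ofFn fun j : Fin n => (y j).2 := by
      intro n
      induction n with
      | zero => simp [hy0]
      | succ n ih =>
        rw [(hy n).1, ih, List.ofFn_succ_last]
        simp
    have hwin := hw (fun n => (y n).2) (by simp [hy0]) (fun i => (hy i).2.1)
      (fun i ho => by rw [← hist i]; exact (hy i).2.2 ho)
    rw [← winsPlay_shift k] at hwin
    simpa [hk] using hwin

/-! ### Dominions avoiding the top priority -/

/-- If the target is reachable from every state, then some path visits it infinitely often. -/
theorem exists_path_inf {S : Type*} {step : S → S → Prop} {F : S → Prop}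
    (hT : ∀ s, ∃ t, step s t) (hF : ∀ s, ∃ t, Relation.ReflTransGen step s t ∧ F t) (s₀ : S) :
    ∃ x : ℕ → S, (∀ n, step (x n) (x (n + 1))) ∧ ∀ N, ∃ i, N ≤ i ∧ F (x i) := by
  classical
  -- `R n s`: the target is reachable from `s` in exactly `n` steps
  let R : ℕ → S → Prop := fun n =>
    Nat.rec (motive := fun _ => S → Prop) F (fun _ Q s => ∃ t, step s t ∧ Q t) n
  have hR : ∀ s, ∃ n, R n s := by
    intro s
    obtain ⟨t, hst, ht⟩ := hF s
    induction hst using Relation.ReflTransGen.head_induction_on with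
    | refl => exact ⟨0, ht⟩
    | head hab _ ih =>
      obtain ⟨n, hn⟩ := ih
      exact ⟨n + 1, _, hab, hn⟩
  let d : S → ℕ := fun s => Nat.find (hR s)
  have hd : ∀ s, R (d s) s := fun s => Nat.find_spec (hR s)
  have hnext : ∀ s, ∃ t, step s t ∧ (d s ≠ 0 → d t < d s) := by
    intro s
    rcases h : d s with _ | m
    · obtain ⟨t, ht⟩ := hT s
      exact ⟨t, ht, by simp⟩
    · have h1 := hd s
      rw [h] at h1
      obtain ⟨t, ht, hm⟩ := h1
      exact ⟨t, ht, fun _ => Nat.lt_succ_of_le (Nat.find_min' (hR t) hm)⟩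
  choose f hf hfd using hnext
  refine ⟨fun n => f^[n] s₀, fun n => ?_, ?_⟩
  · simp only [Function.iterate_succ_apply']
    exact hf _
  · have : ∀ m N, d (f^[N] s₀) = m → ∃ i, N ≤ i ∧ F (f^[i] s₀) := by
      intro m
      induction m using Nat.strong_induction_on with
      | _ m ih =>
        intro N hN
        by_cases hm : m = 0
        · have h1 := hd (f^[N] s₀)
          rw [hN, hm] at h1
          exact ⟨N, le_rfl, h1⟩
        · obtain ⟨i, hi, hFi⟩ := ih (d (f^[N + 1] s₀))
            (by
              rw [Function.iterate_succ_apply']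
              have := hfd (f^[N] s₀) (by omega)
              omega) (N + 1) rfl
          exact ⟨i, by omega, hFi⟩
    exact fun N => this _ N rfl

/-- If `h` bounds the priorities of a nonempty dominion of `P` and does not have the parity of `P`,
the dominion contains a nonempty dominion of `P` without priority `h`: the vertices of
the states reachable from a state after which `h` can no longer occur. -/
theorem Dom.exists_lt {h : ℕ} (hD : G.Dom P U D) (hne : D.Nonempty)
    (hmax : ∀ v ∈ D, G.priority v ≤ h) (hm : ¬ P.matchesPriority h) :
    ∃ X ⊆ D, X.Nonempty ∧ G.Dom P U X ∧ ∀ v ∈ X, G.priority v < h := by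
  obtain ⟨hDU, S, lab, step, rfl, hE, hT, hO, hW⟩ := hD
  obtain ⟨_, s₀, rfl⟩ := hne
  by_cases hF : ∀ s, ∃ t, Relation.ReflTransGen step s t ∧ G.priority (lab t) = h
  · exfalso
    obtain ⟨x, hx, hinf⟩ := exists_path_inf hT hF s₀
    obtain ⟨p, hp, hpm, hmp⟩ := hW x hx
    obtain ⟨i, -, hi⟩ := hp 0
    have h1 : h ≤ p := hpm h hinf
    have h2 : p ≤ h := hi ▸ hmax _ ⟨_, rfl⟩
    exact hm (le_antisymm h2 h1 ▸ hmp)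
  · push Not at hF
    obtain ⟨r, hr⟩ := hF
    have hsub : Set.range (fun s : {s // Relation.ReflTransGen step r s} => lab s.1) ⊆
        Set.range lab := by
      rintro _ ⟨s, rfl⟩
      exact ⟨s.1, rfl⟩
    refine ⟨_, hsub, ⟨_, ⟨r, .refl⟩, rfl⟩, ⟨hsub.trans hDU, {s // Relation.ReflTransGen step r s},
      fun s => lab s.1, fun s t => step s.1 t.1, rfl, fun s t h => hE _ _ h, ?_, ?_, ?_⟩, ?_⟩
    · rintro ⟨s, hs⟩
      obtain ⟨t, ht⟩ := hT s
      exact ⟨⟨t, hs.tail ht⟩, ht⟩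
    · rintro ⟨s, hs⟩ ho w hw hvw
      obtain ⟨t, ht, hl⟩ := hO s ho w hw hvw
      exact ⟨⟨t, hs.tail ht⟩, ht, hl⟩
    · intro x hx
      exact hW (fun n => (x n).1) hx
    · rintro _ ⟨s, rfl⟩
      exact lt_of_le_of_ne (hmax _ ⟨s.1, rfl⟩) (hr s.1 s.2)

/-! ### Correctness of the procedure -/

theorem solve_subset (h pMe pOp : ℕ) : G.solve P U h pMe pOp ⊆ U := by
  rw [solve.eq_def]
  split_ifs with h1 h2 h3
  · exact Set.empty_subset _
  · cases P <;> simp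
  · exact subset_rfl
  · exact Set.sdiff_subset

/-- The precision argument for a single call: `D` is a dominion of `Q` with at most `p` vertices,
the set `W` contains all dominions of `Q` in `U` of size at most `p / 2`, the set `W'` contains
all those of size at most `p` in the subgame `G2` without the opponent's attractor of priority
`h`, and `W3` contains all those of size at most `p / 2` in the remaining game. Then the three
sets removed cover `D`. -/
theorem opp_subset_of_precision [Finite V] {Q : Player} {h p : ℕ} {W W' W3 W1 G1 W2 : Set V}
    (hU : G.Sub U) (hmax : ∀ v ∈ U, G.priority v ≤ h) (hm : ¬ Q.matchesPriority h)
    (hD : G.Dom Q U D) (hcard : D.ncard ≤ p)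
    (hW1 : W1 = G.attrIn Q U W) (hG1 : G1 = U \ W1) (hW2 : W2 = G.attrIn Q G1 W')
    (hW : ∀ X, G.Dom Q U X → X.ncard ≤ p / 2 → X ⊆ W)
    (hW' : ∀ X, G.Dom Q (G1 \ G.attrIn Q.opp G1 {v ∈ G1 | G.priority v = h}) X →
      X.ncard ≤ p → X ⊆ W')
    (hW3 : ∀ X, G.Dom Q (G1 \ W2) X → X.ncard ≤ p / 2 → X ⊆ W3) :
    D ⊆ W1 ∪ W2 ∪ W3 := by
  have hsG1 : G.Sub G1 := by
    rw [hG1, hW1]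
    exact hU.diff_attrIn _ _
  have hG1out : ∀ v ∈ G1, G.owner v = Q → ∀ w ∈ U, G.edge v w → w ∈ G1 := by
    intro v hv ho w hw hvw
    rw [hG1, hW1] at hv ⊢
    exact mem_diff_attrIn hv ho hw hvw
  have hD1 : G.Dom Q G1 (D ∩ G1) := by
    rw [hG1, hW1]
    exact hD.diff_attrIn_same hU W
  have hD3 : G.Dom Q (G1 \ W2) (D ∩ G1 ∩ (G1 \ W2)) := by
    rw [hW2]
    exact hD1.diff_attrIn_same hsG1 W'
  have hDD : G.Dom Q D D := hD.mono hD.sub hD.1 subset_rfl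
  obtain ⟨A, hA⟩ : ∃ A, Maximal (fun A => G.Dom Q D A ∧ A ⊆ W1) A :=
    (Set.toFinite {A : Set V | G.Dom Q D A ∧ A ⊆ W1}).exists_maximal
      ⟨∅, dom_empty, Set.empty_subset _⟩
  obtain ⟨hAD, hAW⟩ := hA.prop
  have hext : ∀ v ∈ D, (∃ w ∈ A, G.edge v w) →
      (G.owner v ≠ Q → ∀ w ∈ D, G.edge v w → w ∈ A) → v ∈ A := by
    intro v hv hs ho
    refine hA.le_of_ge (y := A ∪ {v}) ⟨hAD.insert hv hs ho, ?_⟩ Set.subset_union_left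
      (Or.inr rfl)
    refine Set.union_subset hAW (Set.singleton_subset_iff.2 ?_)
    rw [hW1] at hAW ⊢
    by_cases hQ : G.owner v = Q
    · obtain ⟨w, hw, hvw⟩ := hs
      exact .player (hD.1 hv) hQ (hD.1 (hAD.1 hw)) hvw (hAW hw)
    · exact .opponent (hD.1 hv) hQ fun w hw hvw =>
        hAW (ho hQ w (hD.closed hv hQ hw hvw) hvw)
  by_cases hDA : D ⊆ A
  · exact fun v hv => .inl (.inl (hAW (hDA hv)))
  have hne : (D \ A).Nonempty := Set.sdiff_nonempty.2 hDA
  have hsT : G.Sub (D \ A) := by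
    intro v hv
    by_contra! hc
    have hall : ∀ w ∈ D, G.edge v w → w ∈ A := by
      intro w hw hvw
      by_contra hn
      exact hc w ⟨hw, hn⟩ hvw
    obtain ⟨w, hw, hvw⟩ := hD.sub v hv.1
    exact hv.2 (hext v hv.1 ⟨w, hall w hw hvw, hvw⟩ fun _ => hall)
  have hT : G.Dom Q (D \ A) (D \ A) := by
    have := hDD.inter hsT
      (fun v _ hv ho w hw hvw => ⟨hw, fun hwA =>
        hv.2 (hext v hv.1 ⟨w, hwA, hvw⟩ fun hn => (hn ho).elim)⟩)
      (fun _ _ _ _ w hw _ => hw.1)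
    rwa [Set.inter_eq_right.2 Set.sdiff_subset] at this
  obtain ⟨X, hXT, ⟨x, hx⟩, hX, hXh⟩ :=
    hT.exists_lt hne (fun v hv => hmax v (hD.1 hv.1)) hm
  have hXW : X ∩ G1 ⊆ W' := by
    have h1 : G.Dom Q G1 (X ∩ G1) :=
      hX.inter hsG1 (fun v _ hv ho w hw hvw => hG1out v hv ho w (hD.1 (hXT hw).1) hvw)
        (fun v hv _ ho w hw hvw => by
          rw [hG1] at hw
          exact ⟨hD.closed (hXT hv).1 ho hw.1 hvw, fun hwA => hw.2 (hAW hwA)⟩)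
    refine hW' _ (h1.diff_attrIn_opp hsG1 ?_) ?_
    · rw [Set.disjoint_left]
      exact fun v hv hv' => (hXh v hv.1).ne hv'.2
    · exact (Set.ncard_le_ncard (fun v hv => (hXT hv.1).1)).trans hcard
  have hC : G.Dom Q D (A ∪ X) := hAD.union hX
  have hCcard : p / 2 < (A ∪ X).ncard := by
    by_contra hn
    have hCW := hW _ (hD.trans hU hC) (not_lt.1 hn)
    refine (hXT hx).2 (hA.le_of_ge (y := A ∪ X) ⟨hC, ?_⟩ Set.subset_union_left (Or.inr hx))
    rw [hW1]
    exact fun v hv => .base (hCW hv)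
  have hD3card : (D ∩ G1 ∩ (G1 \ W2)).ncard ≤ p / 2 := by
    have h1 : D ∩ G1 ∩ (G1 \ W2) ⊆ D \ (A ∪ X) := by
      rintro v ⟨⟨hvD, hv1⟩, -, hv2⟩
      refine ⟨hvD, ?_⟩
      rintro (hvA | hvX)
      · rw [hG1] at hv1
        exact hv1.2 (hAW hvA)
      · rw [hW2] at hv2
        exact hv2 (.base (hXW ⟨hvX, hv1⟩))
    have h2 := Set.ncard_le_ncard h1
    rw [Set.ncard_sdiff hC.1] at h2
    omega
  intro v hv
  by_cases hv1 : v ∈ W1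
  · exact .inl (.inl hv1)
  by_cases hv2 : v ∈ W2
  · exact .inl (.inr hv2)
  have hvG : v ∈ G1 := by
    rw [hG1]
    exact ⟨hD.1 hv, hv1⟩
  exact .inr (hW3 _ hD3 hD3card ⟨⟨hv, hvG⟩, hvG, hv2⟩)

/-- The invariant of the recursion: the returned set contains the dominions of `P` of size at most
`pMe` and misses the dominions of the opponent of size at most `pOp`. -/
theorem solve_spec [Finite V] (h : ℕ) : ∀ (pOp pMe : ℕ) (P : Player) (U : Set V), G.Sub U →
    (∀ v ∈ U, G.priority v ≤ h) → P.matchesPriority h →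
    (∀ D, G.Dom P U D → D.ncard ≤ pMe → D ⊆ G.solve P U h pMe pOp) ∧
    (∀ D, G.Dom P.opp U D → D.ncard ≤ pOp → Disjoint D (G.solve P U h pMe pOp)) := by
  induction h using Nat.strong_induction_on with
  | _ h ihh =>
  intro pOp
  induction pOp using Nat.strong_induction_on with
  | _ pOp ihp =>
  intro pMe P U hU hmax hm
  rw [solve.eq_def]
  split_ifs with hU0 hh hp
  · subst hU0
    exact ⟨fun D hD _ => hD.1, fun D _ _ => Set.disjoint_empty _⟩
  · subst hh
    cases P with
    | odd => simp [Player.matchesPriority] at hm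
    | even =>
      refine ⟨fun D hD _ => hD.1, fun D hD _ => ?_⟩
      rcases D.eq_empty_or_nonempty with rfl | hne
      · exact Set.empty_disjoint _
      · obtain ⟨X, -, ⟨x, hx⟩, -, hlt⟩ :=
          hD.exists_lt hne (fun v hv => hmax v (hD.1 hv)) (not_opp_matches hm)
        exact absurd (hlt x hx) (Nat.not_lt_zero _)
  · subst hp
    refine ⟨fun D hD _ => hD.1, fun D hD hc => ?_⟩
    rw [(Set.ncard_eq_zero (Set.toFinite D)).1 (Nat.le_zero.1 hc)]
    exact Set.empty_disjoint _
  · have hlt : pOp / 2 < pOp := Nat.div_lt_self (Nat.pos_of_ne_zero hp) one_lt_two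
    let W := U \ G.solve P U h pMe (pOp / 2)
    let W1 := G.attrIn P.opp U W
    let G1 := U \ W1
    let Nh := {v ∈ G1 | G.priority v = h}
    let G2 := G1 \ G.attrIn P G1 Nh
    let W' := G.solve P.opp G2 (h - 1) pOp pMe
    let W2 := G.attrIn P.opp G1 W'
    let G3 := G1 \ W2
    let W3 := G3 \ G.solve P G3 h pMe (pOp / 2)
    change (∀ D, G.Dom P U D → D.ncard ≤ pMe → D ⊆ U \ (W1 ∪ W2 ∪ W3)) ∧
      (∀ D, G.Dom P.opp U D → D.ncard ≤ pOp → Disjoint D (U \ (W1 ∪ W2 ∪ W3)))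
    have hsG1 : G.Sub G1 := hU.diff_attrIn _ _
    have hsG2 : G.Sub G2 := hsG1.diff_attrIn _ _
    have hsG3 : G.Sub G3 := hsG1.diff_attrIn _ _
    have hG1U : G1 ⊆ U := Set.sdiff_subset
    have hG3U : G3 ⊆ U := Set.sdiff_subset.trans hG1U
    obtain ⟨ih1, ih1'⟩ := ihp _ hlt pMe P U hU hmax hm
    obtain ⟨ih3, ih3'⟩ := ihp _ hlt pMe P G3 hsG3 (fun v hv => hmax v (hG3U hv)) hm
    obtain ⟨ih2, ih2'⟩ := ihh (h - 1) (by omega) pMe pOp P.opp G2 hsG2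
      (fun v hv => by
        have h1 := hmax v (hG1U hv.1)
        have h2 : G.priority v ≠ h := fun he => hv.2 (.base ⟨hv.1, he⟩)
        omega)
      (opp_matches_pred hh hm)
    rw [opp_opp] at ih2'
    constructor
    · intro D hD hc
      have hDW : Disjoint D W :=
        Set.disjoint_left.2 fun v hv hw => hw.2 (ih1 D hD hc hv)
      have hD1 : G.Dom P G1 D := hD.diff_attrIn_opp hU hDW
      have hDW' : Disjoint D W' := by
        have h2 : G.Dom P G2 (D ∩ G2) := hD1.diff_attrIn_same hsG1 Nh
        have h3 := ih2' _ h2 ((Set.ncard_le_ncard Set.inter_subset_left).trans hc)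
        rw [Set.disjoint_left] at h3 ⊢
        exact fun v hv hw => h3 ⟨hv, solve_subset _ _ _ hw⟩ hw
      have hD3 : G.Dom P G3 D := hD1.diff_attrIn_opp hsG1 hDW'
      intro v hv
      refine ⟨hD.1 hv, ?_⟩
      rintro ((h1 | h2) | h3)
      · exact (hD1.1 hv).2 h1
      · exact (hD3.1 hv).2 h2
      · exact h3.2 (ih3 D hD3 hc hv)
    · intro D hD hc
      have hsub : D ⊆ W1 ∪ W2 ∪ W3 := by
        refine opp_subset_of_precision (W := W) (W' := W') hU hmax (not_opp_matches hm) hD hc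
          rfl rfl rfl ?_ ?_ ?_
        · exact fun X hX hXc => Set.subset_sdiff.2 ⟨hX.1, ih1' X hX hXc⟩
        · rw [opp_opp]
          exact fun X hX hXc => ih2 X hX hXc
        · exact fun X hX hXc => Set.subset_sdiff.2 ⟨hX.1, ih3' X hX hXc⟩
      exact Set.disjoint_left.2 fun v hv hr => hr.2 (hsub hv)

end ParityGame

/-- For a parity game `G` with `n` vertices and maximal priority at most
an even `h`, the set `Solve_E(G, h, n, n)` contains Even's winning region and is disjoint
from Odd's winning region. -/
theorem solve_solves {V : Type*} [Finite V] (G : ParityGame V) (h : ℕ) (hEven : Even h)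
    (hmax : ∀ v : V, G.priority v ≤ h) :
    G.winningRegion .even ⊆ G.solve .even Set.univ h (Nat.card V) (Nat.card V) ∧
    Disjoint (G.solve .even Set.univ h (Nat.card V) (Nat.card V))
      (G.winningRegion .odd) := by
  have hsub : G.Sub Set.univ := fun v _ => by
    obtain ⟨w, hw⟩ := G.succ_nonempty v
    exact ⟨w, trivial, hw⟩
  obtain ⟨h1, h2⟩ := ParityGame.solve_spec h (Nat.card V) (Nat.card V) .even Set.univ hsub
    (fun v _ => hmax v) hEven
  constructor
  · intro v hv
    obtain ⟨D, hvD, hD⟩ := ParityGame.WinsFrom.exists_dom hv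
    exact h1 D hD (Set.ncard_le_card D) hvD
  · rw [Set.disjoint_left]
    intro v hvs hv
    obtain ⟨D, hvD, hD⟩ := ParityGame.WinsFrom.exists_dom hv
    exact Set.disjoint_left.1 (h2 D hD (Set.ncard_le_card D)) hvD hvs
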